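/- Interaction/localization estimates for solitons: let m, n ∈ {1,2}. There exists C > 0 such that for all sufficiently large t and all j ≠ k in {1,…,N}: (i) ∫_ℝ (|R_k^{(m)}(t)| + |∂ₓR_k^{(m)}(t)|) φ_j(x,t) dx ≤ C e^{−4 ω⋆^{3/2} t}; (ii) ∫_ℝ (|R_k^{(m)}(t)| + |∂ₓR_k^{(m)}(t)|) (1 − φ_k(x,t)) dx ≤ C e^{−4 ω⋆^{3/2} t}; (iii) ∫_ℝ (|R_k^{(m)}(t)| + |∂ₓR_k^{(m)}(t)|)(|R_j^{(n)}(t)| + |∂ₓR_j^{(n)}(t)|) dx ≤ C e^{−4 ω⋆^{3/2} t}. -/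

import Mathlib

noncomputable section
open MeasureTheory Real Filter

/-- Hyperbolic secant. -/
def sech (x : ℝ) : ℝ := 1 / Real.cosh x

/-- The ground state profile `Φ_ω(x) = (1-ω²)^{1/(2p)} ((p+1) sech²(p√(1-ω²)x))^{1/(2p)}`. -/
def groundState (p ω : ℝ) (x : ℝ) : ℝ :=
  (1 - ω ^ 2) ^ (1 / (2 * p)) *
    ((p + 1) * sech (p * Real.sqrt (1 - ω ^ 2) * x) ^ 2) ^ (1 / (2 * p))

/-- Component `m` of the soliton `R_j`. -/
def soliton (p ω c : ℝ) (m : Fin 2) (t x : ℝ) : ℝ :=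
  if m = 0 then groundState p ω (x - ω * t - c)
  else -ω * groundState p ω (x - ω * t - c)

/-- `ω⋆ = (1/256) min{1-ω_j², |ω_j-ω_k| : j ≠ k}`. -/
def omegaStar {N : ℕ} (ω : Fin N → ℝ) : ℝ :=
  (1 / 256) * sInf ({a | ∃ j, a = 1 - ω j ^ 2} ∪ {a | ∃ j k, j ≠ k ∧ a = |ω j - ω k|})

/-- The cutoff `ψ_j(x,t)`: `ψ_1 ≡ 1` and `ψ_j(x,t) = ψ((x - m_j t)/√t)` with
`m_j = (ω_{j-1} + ω_j)/2` for `j ≥ 2` (here indices start at `0`). -/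
def psiCut {N : ℕ} (ψ : ℝ → ℝ) (ω : Fin N → ℝ) (i : Fin N) (t x : ℝ) : ℝ :=
  if i.val = 0 then 1
  else ψ ((x - ((ω ⟨i.val - 1, Nat.lt_of_le_of_lt (Nat.sub_le _ _) i.isLt⟩ + ω i) / 2) * t) /
    Real.sqrt t)

/-- The partition functions `φ_j = ψ_j - ψ_{j+1}` (`j < N`), `φ_N = ψ_N`. -/
def phiCut {N : ℕ} (ψ : ℝ → ℝ) (ω : Fin N → ℝ) (i : Fin N) (t x : ℝ) : ℝ :=
  if h : i.val + 1 < N then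
    psiCut ψ ω i t x - psiCut ψ ω ⟨i.val + 1, h⟩ t x
  else psiCut ψ ω i t x

/-!
Each soliton and its `x`-derivative decay like `exp (-√(1 - ω²) |x - ω t|)` away from the centre
`ω t`, hence like `exp (-√δ |x - ω t|)` with `δ = 256 ω⋆`. The centres separate at speed at least
`δ`, and for large `t` the cutoff `φ_j` is exactly `1` within distance `δ t / 4` of the `j`-th
centre and exactly `0` that close to any other one. So every integrand carries a factor
`exp (-√δ |x - ω t|)`, and either vanishes for `|x - ω t| < δ t / 4` or carries a second such
factor around a far centre. Half of the exponent pays for integrability in `x`, the other half for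
the decay in `t`; the resulting rate `δ ^ (3/2) / 8` is `512 ω⋆ ^ (3/2)`.
-/

section ExponentialLocalization

variable {a s d v w A B : ℝ} {f g : ℝ → ℝ}

lemma integral_exp_neg_mul_abs_sub (ha : 0 < a) (v : ℝ) :
    ∫ x : ℝ, exp (-a * |x - v|) = 2 / a := by
  rw [integral_sub_right_eq_self (fun x : ℝ => exp (-a * |x|)) v,
    integral_comp_abs (f := fun x => exp (-a * x)), integral_exp_mul_Ioi (neg_lt_zero.2 ha)]
  simp only [mul_zero, exp_zero]
  ring

lemma integrable_exp_neg_mul_abs_sub (ha : 0 < a) (v : ℝ) :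
    Integrable fun x : ℝ => exp (-a * |x - v|) :=
  .of_integral_ne_zero <| by rw [integral_exp_neg_mul_abs_sub ha]; positivity

lemma integrable_and_abs_integral_le_of_abs_le_exp (ha : 0 < a)
    (hf : AEStronglyMeasurable f) (hfB : ∀ x, |f x| ≤ B * exp (-a * |x - v|)) :
    Integrable f ∧ |∫ x, f x| ≤ 2 * B / a := by
  have hint := (integrable_exp_neg_mul_abs_sub ha v).const_mul B
  have hle : ∀ᵐ x, ‖f x‖ ≤ B * exp (-a * |x - v|) := .of_forall hfB
  refine ⟨hint.mono' hf hle, (norm_integral_le_of_norm_le hint hle).trans_eq ?_⟩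
  rw [integral_const_mul, integral_exp_neg_mul_abs_sub ha]
  ring

lemma exp_neg_mul_mul_exp_neg_mul_le {r q : ℝ} (hs : 0 ≤ s) (hq : 0 ≤ q) (hd : d ≤ r + q) :
    exp (-s * r) * exp (-s * q) ≤ exp (-(s / 2) * d) * exp (-(s / 2) * r) := by
  rw [← exp_add, ← exp_add, exp_le_exp]
  nlinarith [mul_le_mul_of_nonneg_left hd hs, mul_nonneg hs hq]

lemma nonneg_of_abs_le_mul_exp (hf : ∀ x, |f x| ≤ A * exp (-s * |x - v|)) : 0 ≤ A :=
  nonneg_of_mul_nonneg_left ((abs_nonneg (f v)).trans (hf v)) (exp_pos _)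

lemma integrable_mul_and_abs_integral_le_of_eq_zero_near (hs : 0 < s)
    (hf : AEStronglyMeasurable f) (hg : AEStronglyMeasurable g)
    (hfA : ∀ x, |f x| ≤ A * exp (-s * |x - v|)) (hgB : ∀ x, |g x| ≤ B)
    (hg0 : ∀ x, |x - v| < d → g x = 0) :
    Integrable (fun x => f x * g x) ∧
      |∫ x, f x * g x| ≤ 4 * A * B / s * exp (-(s / 2) * d) := by
  have hA : 0 ≤ A := nonneg_of_abs_le_mul_exp hfA
  have hB : 0 ≤ B := (abs_nonneg (g 0)).trans (hgB 0)
  have hpointwise (x : ℝ) :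
      |f x * g x| ≤ A * B * exp (-(s / 2) * d) * exp (-(s / 2) * |x - v|) := by
    rcases lt_or_ge |x - v| d with hx | hx
    · rw [hg0 x hx, mul_zero, abs_zero]
      positivity
    have hexp : exp (-s * |x - v|) ≤ exp (-(s / 2) * d) * exp (-(s / 2) * |x - v|) := by
      simpa using exp_neg_mul_mul_exp_neg_mul_le hs.le le_rfl (hx.trans_eq (add_zero _).symm)
    calc |f x * g x| = |f x| * |g x| := abs_mul _ _
      _ ≤ A * (exp (-(s / 2) * d) * exp (-(s / 2) * |x - v|)) * B := by
        gcongr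
        exacts [(hfA x).trans (by gcongr), hgB x]
      _ = A * B * exp (-(s / 2) * d) * exp (-(s / 2) * |x - v|) := by ring
  obtain ⟨hint, hle⟩ :=
    integrable_and_abs_integral_le_of_abs_le_exp (half_pos hs) (hf.mul hg) hpointwise
  exact ⟨hint, hle.trans_eq (by field_simp; ring)⟩

lemma integrable_mul_and_abs_integral_le_of_le_abs_sub (hs : 0 < s)
    (hf : AEStronglyMeasurable f) (hg : AEStronglyMeasurable g)
    (hfA : ∀ x, |f x| ≤ A * exp (-s * |x - v|)) (hgB : ∀ x, |g x| ≤ B * exp (-s * |x - w|))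
    (hd : d ≤ |v - w|) :
    Integrable (fun x => f x * g x) ∧
      |∫ x, f x * g x| ≤ 4 * A * B / s * exp (-(s / 2) * d) := by
  have hA : 0 ≤ A := nonneg_of_abs_le_mul_exp hfA
  have hB : 0 ≤ B := nonneg_of_abs_le_mul_exp hgB
  have hpointwise (x : ℝ) :
      |f x * g x| ≤ A * B * exp (-(s / 2) * d) * exp (-(s / 2) * |x - v|) := by
    have hdist : d ≤ |x - v| + |x - w| := by
      rw [abs_sub_comm x v]
      exact hd.trans (abs_sub_le v x w)
    calc |f x * g x| = |f x| * |g x| := abs_mul _ _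
      _ ≤ (A * exp (-s * |x - v|)) * (B * exp (-s * |x - w|)) := by
        gcongr
        exacts [hfA x, hgB x]
      _ = A * B * (exp (-s * |x - v|) * exp (-s * |x - w|)) := by ring
      _ ≤ A * B * (exp (-(s / 2) * d) * exp (-(s / 2) * |x - v|)) :=
        mul_le_mul_of_nonneg_left
          (exp_neg_mul_mul_exp_neg_mul_le hs.le (abs_nonneg _) hdist) (by positivity)
      _ = A * B * exp (-(s / 2) * d) * exp (-(s / 2) * |x - v|) := by ring
  obtain ⟨hint, hle⟩ :=
    integrable_and_abs_integral_le_of_abs_le_exp (half_pos hs) (hf.mul hg) hpointwise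
  exact ⟨hint, hle.trans_eq (by field_simp; ring)⟩

end ExponentialLocalization

section GroundState

variable {p ω : ℝ}

lemma sech_pos (x : ℝ) : 0 < sech x :=
  one_div_pos.2 (cosh_pos x)

lemma sech_le_two_mul_exp_neg_abs (x : ℝ) : sech x ≤ 2 * exp (-|x|) := by
  rw [sech, div_le_iff₀ (cosh_pos x), ← cosh_abs, cosh_eq]
  have hexp : exp (-|x|) * exp |x| = 1 := by rw [← exp_add, neg_add_cancel, exp_zero]
  nlinarith [sq_nonneg (exp (-|x|))]

lemma hasDerivAt_sech (x : ℝ) : HasDerivAt sech (-(tanh x * sech x)) x := by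
  have hsech : sech = cosh⁻¹ := funext fun y => one_div (cosh y)
  rw [hsech, tanh_eq_sinh_div_cosh]
  refine ((hasDerivAt_cosh x).inv (cosh_pos x).ne').congr_deriv ?_
  rw [Pi.inv_apply]
  field_simp

lemma groundState_nonneg (hp : 0 ≤ p) (hω : ω ^ 2 ≤ 1) (y : ℝ) : 0 ≤ groundState p ω y :=
  mul_nonneg (rpow_nonneg (sub_nonneg.2 hω) _) (rpow_nonneg (by positivity) _)

lemma groundState_le_mul_exp (hp : 0 < p) (hω : ω ^ 2 ≤ 1) (y : ℝ) :
    groundState p ω y ≤ (4 * (p + 1)) ^ (1 / (2 * p)) * exp (-√(1 - ω ^ 2) * |y|) := by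
  set b := √(1 - ω ^ 2)
  have hb : 0 ≤ b := sqrt_nonneg _
  have hamplitude : (1 - ω ^ 2) ^ (1 / (2 * p)) ≤ 1 :=
    rpow_le_one (sub_nonneg.2 hω) (sub_le_self _ (sq_nonneg ω)) (by positivity)
  have hsech : sech (p * b * y) ≤ 2 * exp (-(p * b * |y|)) := by
    simpa [abs_mul, abs_of_pos hp, abs_of_nonneg hb] using sech_le_two_mul_exp_neg_abs (p * b * y)
  have hbase : (p + 1) * sech (p * b * y) ^ 2 ≤ 4 * (p + 1) * exp (-(2 * p * b * |y|)) :=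
    calc (p + 1) * sech (p * b * y) ^ 2 ≤ (p + 1) * (2 * exp (-(p * b * |y|))) ^ 2 := by
          gcongr
          exact (sech_pos _).le
      _ = 4 * (p + 1) * exp (-(2 * p * b * |y|)) := by
          rw [mul_pow, ← exp_nat_mul]
          push_cast
          ring_nf
  calc groundState p ω y ≤ 1 * (4 * (p + 1) * exp (-(2 * p * b * |y|))) ^ (1 / (2 * p)) := by
        unfold groundState
        gcongr
    _ = (4 * (p + 1)) ^ (1 / (2 * p)) * exp (-b * |y|) := by
        rw [one_mul, mul_rpow (by positivity) (exp_pos _).le, ← exp_mul]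
        congr 2
        field_simp

lemma hasDerivAt_groundState (hp : 0 < p) (ω y : ℝ) :
    HasDerivAt (groundState p ω)
      (-(√(1 - ω ^ 2) * tanh (p * √(1 - ω ^ 2) * y) * groundState p ω y)) y := by
  unfold groundState
  generalize √(1 - ω ^ 2) = b
  have hsech : 0 < sech (p * b * y) := sech_pos _
  have hbase : 0 < (p + 1) * sech (p * b * y) ^ 2 := by positivity
  have harg : HasDerivAt (fun z => p * b * z) (p * b) y := by
    simpa using (hasDerivAt_id y).const_mul (p * b)
  refine (((((hasDerivAt_sech _).comp y harg).pow 2).const_mul (p + 1)).rpow_const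
    (p := 1 / (2 * p)) (.inl hbase.ne')).const_mul ((1 - ω ^ 2) ^ (1 / (2 * p))) |>.congr_deriv ?_
  simp only [Pi.pow_apply, Function.comp_apply]
  rw [rpow_sub_one hbase.ne', Nat.add_one_sub_one, pow_one, Nat.cast_ofNat]
  field_simp

lemma abs_deriv_groundState_le (hp : 0 < p) (hω : ω ^ 2 ≤ 1) (y : ℝ) :
    |deriv (groundState p ω) y| ≤ groundState p ω y := by
  have hrate : √(1 - ω ^ 2) ≤ 1 := sqrt_le_one.2 (sub_le_self _ (sq_nonneg ω))
  have hnonneg := groundState_nonneg hp.le hω y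
  rw [(hasDerivAt_groundState hp ω y).deriv, abs_neg, abs_mul, abs_mul,
    abs_of_nonneg (sqrt_nonneg _), abs_of_nonneg hnonneg]
  exact mul_le_of_le_one_left hnonneg
    (mul_le_one₀ hrate (abs_nonneg _) (abs_tanh_lt_one _).le)

end GroundState

section Soliton

variable {p ω c s : ℝ} {m : Fin 2} {t : ℝ}

/-- The pointwise size `|R^{(m)}(t, x)| + |∂ₓ R^{(m)}(t, x)|` of a soliton component, which is the
quantity integrated in all three estimates. -/
def solitonSize (p ω c : ℝ) (m : Fin 2) (t x : ℝ) : ℝ :=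
  |soliton p ω c m t x| + |deriv (soliton p ω c m t) x|

lemma solitonSize_nonneg (p ω c : ℝ) (m : Fin 2) (t x : ℝ) : 0 ≤ solitonSize p ω c m t x := by
  unfold solitonSize
  positivity

lemma measurable_groundState (p ω : ℝ) : Measurable (groundState p ω) := by
  unfold groundState sech
  fun_prop

lemma measurable_solitonSize (p ω c : ℝ) (m : Fin 2) (t : ℝ) :
    Measurable (solitonSize p ω c m t) := by
  have hsoliton : Measurable (soliton p ω c m t) := by
    have := measurable_groundState p ω
    unfold soliton
    split_ifs <;> fun_prop
  exact hsoliton.abs.add (measurable_deriv _).abs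

lemma solitonSize_le_two_mul_groundState (hp : 0 < p) (hω : ω ^ 2 ≤ 1) (x : ℝ) :
    solitonSize p ω c m t x ≤ 2 * groundState p ω (x - ω * t - c) := by
  obtain ⟨σ, hσ, hsoliton⟩ : ∃ σ : ℝ, |σ| ≤ 1 ∧
      soliton p ω c m t = fun x => σ * groundState p ω (x - (ω * t + c)) := by
    by_cases hm : m = 0
    · exact ⟨1, by simp, by ext x; simp [soliton, hm, sub_sub]⟩
    · exact ⟨-ω, by rwa [abs_neg, ← sq_le_one_iff_abs_le_one],
        by ext x; simp [soliton, hm, sub_sub]⟩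
  have hnonneg := groundState_nonneg hp.le hω (x - ω * t - c)
  have hderiv := abs_deriv_groundState_le hp hω (x - ω * t - c)
  rw [solitonSize, hsoliton, deriv_const_mul_field, deriv_comp_sub_const, abs_mul,
    abs_mul, ← mul_add, ← sub_sub, abs_of_nonneg hnonneg]
  exact (mul_le_of_le_one_left (by positivity) hσ).trans (by linarith)

lemma exists_solitonSize_le_mul_exp (hp : 0 < p) (hω : ω ^ 2 ≤ 1) (c : ℝ) (hs : 0 ≤ s)
    (hsω : s ≤ √(1 - ω ^ 2)) :
    ∃ A : ℝ, ∀ m t x, solitonSize p ω c m t x ≤ A * exp (-s * |x - ω * t|) := by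
  refine ⟨2 * (4 * (p + 1)) ^ (1 / (2 * p)) * exp (s * |c|), fun m t x => ?_⟩
  have hexp : exp (-√(1 - ω ^ 2) * |x - ω * t - c|) ≤
      exp (s * |c|) * exp (-s * |x - ω * t|) := by
    rw [← exp_add, exp_le_exp]
    nlinarith [mul_le_mul_of_nonneg_left (abs_sub_abs_le_abs_sub (x - ω * t) c) hs,
      mul_le_mul_of_nonneg_right hsω (abs_nonneg (x - ω * t - c))]
  calc solitonSize p ω c m t x ≤ 2 * groundState p ω (x - ω * t - c) :=
        solitonSize_le_two_mul_groundState hp hω x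
    _ ≤ 2 * ((4 * (p + 1)) ^ (1 / (2 * p)) * (exp (s * |c|) * exp (-s * |x - ω * t|))) := by
        gcongr
        exact (groundState_le_mul_exp hp hω _).trans (by gcongr)
    _ = _ := by ring

lemma exists_forall_abs_solitonSize_le_mul_exp {ι : Type*} [Finite ι] {ω : ι → ℝ} (hp : 0 < p)
    (hω : ∀ i, ω i ^ 2 ≤ 1) (c : ι → ℝ) (hs : 0 ≤ s) (hsω : ∀ i, s ≤ √(1 - ω i ^ 2)) :
    ∃ A : ℝ, 0 < A ∧ ∀ i m t x,
      |solitonSize p (ω i) (c i) m t x| ≤ A * exp (-s * |x - ω i * t|) := by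
  choose A hA using fun i => exists_solitonSize_le_mul_exp hp (hω i) (c i) hs (hsω i)
  obtain ⟨M, hM⟩ := Finite.exists_le A
  refine ⟨max M 1, by positivity, fun i m t x => ?_⟩
  rw [abs_of_nonneg (solitonSize_nonneg ..)]
  refine (hA i m t x).trans ?_
  gcongr
  exact (hM i).trans (le_max_left _ _)

end Soliton

section Cutoff

variable {N : ℕ} {ψ : ℝ → ℝ} {ω : Fin N → ℝ} {M δ t x : ℝ}

lemma measurable_psiCut (hψ : Measurable ψ) (ω : Fin N → ℝ) (i : Fin N) (t : ℝ) :
    Measurable (psiCut ψ ω i t) := by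
  unfold psiCut
  split_ifs <;> fun_prop

lemma measurable_phiCut (hψ : Measurable ψ) (ω : Fin N → ℝ) (i : Fin N) (t : ℝ) :
    Measurable (phiCut ψ ω i t) := by
  have := measurable_psiCut hψ ω
  unfold phiCut
  split_ifs <;> fun_prop

lemma abs_psiCut_le (hM : 1 ≤ M) (hψ : ∀ s, |ψ s| ≤ M) (ω : Fin N → ℝ) (i : Fin N) (t x : ℝ) :
    |psiCut ψ ω i t x| ≤ M := by
  unfold psiCut
  split_ifs
  exacts [abs_one.trans_le hM, hψ _]

lemma abs_phiCut_le (hM : 1 ≤ M) (hψ : ∀ s, |ψ s| ≤ M) (ω : Fin N → ℝ) (i : Fin N) (t x : ℝ) :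
    |phiCut ψ ω i t x| ≤ 2 * M := by
  have hpsi := fun i => abs_psiCut_le hM hψ ω i t x
  unfold phiCut
  split_ifs with hi
  · exact (abs_sub _ _).trans (by linarith [hpsi i, hpsi ⟨i + 1, hi⟩])
  · linarith [hpsi i]

lemma psiCut_eq_ite_of_near (hψ0 : ∀ s < -1, ψ s = 0) (hψ1 : ∀ s, 1 < s → ψ s = 1)
    (hω : Monotone ω) (hgap : ∀ j k, j < k → ω j + δ ≤ ω k) (ht : 0 < t) {k : Fin N}
    (hx : |x - ω k * t| + √t < δ / 2 * t) (i : Fin N) :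
    psiCut ψ ω i t x = if i ≤ k then 1 else 0 := by
  have hsqrt : 0 < √t := sqrt_pos.2 ht
  obtain ⟨hlower, hupper⟩ := abs_lt.1 (lt_sub_iff_add_lt.2 hx)
  by_cases h0 : i.val = 0
  · rw [psiCut, if_pos h0, if_pos (Fin.le_def.2 (by omega))]
  rw [psiCut, if_neg h0]
  set i' : Fin N := ⟨i.val - 1, _⟩
  have hpred : i'.val + 1 = i.val := Nat.sub_add_cancel (Nat.one_le_iff_ne_zero.2 h0)
  split_ifs with hik
  · have hmid : (ω i' + ω i) / 2 * t ≤ (ω k - δ / 2) * t := by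
      have := hgap i' k (by omega)
      gcongr
      linarith [hω hik]
    exact hψ1 _ ((one_lt_div hsqrt).2 (by linarith))
  · have hmid : (ω k + δ / 2) * t ≤ (ω i' + ω i) / 2 * t := by
      have := hω (show k ≤ i' by omega)
      gcongr
      linarith [hgap k i (not_le.1 hik)]
    exact hψ0 _ ((div_lt_iff₀ hsqrt).2 (by linarith))

lemma phiCut_eq_ite_of_near (hψ0 : ∀ s < -1, ψ s = 0) (hψ1 : ∀ s, 1 < s → ψ s = 1)
    (hω : Monotone ω) (hgap : ∀ j k, j < k → ω j + δ ≤ ω k) (ht : 0 < t) {k : Fin N}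
    (hx : |x - ω k * t| + √t < δ / 2 * t) (i : Fin N) :
    phiCut ψ ω i t x = if i = k then 1 else 0 := by
  have := k.isLt
  simp only [phiCut, psiCut_eq_ite_of_near hψ0 hψ1 hω hgap ht hx, Fin.le_def, Fin.ext_iff]
  split_ifs <;> first | omega | norm_num

lemma integrable_mul_phiCut_and_abs_integral_le {f : ℝ → ℝ} {A s : ℝ} {j k : Fin N} (hs : 0 < s)
    (hf : AEStronglyMeasurable f) (hfA : ∀ x, |f x| ≤ A * exp (-s * |x - ω k * t|))
    (hψ : Measurable ψ) (hM : 1 ≤ M) (hψM : ∀ s, |ψ s| ≤ M)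
    (hψ0 : ∀ s < -1, ψ s = 0) (hψ1 : ∀ s, 1 < s → ψ s = 1)
    (hω : Monotone ω) (hgap : ∀ j k, j < k → ω j + δ ≤ ω k)
    (ht : 0 < t) (hsqrt : √t < δ / 4 * t) (hjk : j ≠ k) :
    Integrable (fun x => f x * phiCut ψ ω j t x) ∧
      |∫ x, f x * phiCut ψ ω j t x| ≤ 4 * A * (2 * M) / s * exp (-(s / 2) * (δ / 4 * t)) := by
  refine integrable_mul_and_abs_integral_le_of_eq_zero_near hs hf
    (measurable_phiCut hψ ω j t).aestronglyMeasurable hfA (abs_phiCut_le hM hψM ω j t)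
    fun x hx => ?_
  have hnear : |x - ω k * t| + √t < δ / 2 * t := by linarith
  rw [phiCut_eq_ite_of_near hψ0 hψ1 hω hgap ht hnear, if_neg hjk]

lemma integrable_mul_one_sub_phiCut_and_abs_integral_le {f : ℝ → ℝ} {A s : ℝ} {k : Fin N}
    (hs : 0 < s) (hf : AEStronglyMeasurable f)
    (hfA : ∀ x, |f x| ≤ A * exp (-s * |x - ω k * t|))
    (hψ : Measurable ψ) (hM : 1 ≤ M) (hψM : ∀ s, |ψ s| ≤ M)
    (hψ0 : ∀ s < -1, ψ s = 0) (hψ1 : ∀ s, 1 < s → ψ s = 1)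
    (hω : Monotone ω) (hgap : ∀ j k, j < k → ω j + δ ≤ ω k)
    (ht : 0 < t) (hsqrt : √t < δ / 4 * t) :
    Integrable (fun x => f x * (1 - phiCut ψ ω k t x)) ∧
      |∫ x, f x * (1 - phiCut ψ ω k t x)|
        ≤ 4 * A * (3 * M) / s * exp (-(s / 2) * (δ / 4 * t)) := by
  refine integrable_mul_and_abs_integral_le_of_eq_zero_near hs hf
    ((measurable_phiCut hψ ω k t).const_sub 1).aestronglyMeasurable hfA (fun x => ?_)
    fun x hx => ?_
  · have := abs_le.1 (abs_phiCut_le hM hψM ω k t x)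
    exact abs_le.2 (by constructor <;> linarith)
  · have hnear : |x - ω k * t| + √t < δ / 2 * t := by linarith
    rw [phiCut_eq_ite_of_near hψ0 hψ1 hω hgap ht hnear, if_pos rfl, sub_self]

end Cutoff

section OmegaStar

variable {N : ℕ} {ω : Fin N → ℝ}

/-- The finite set `{1 - ω_j², |ω_j - ω_k| : j ≠ k}` whose minimum is `256 ω⋆`. -/
def speedGaps (ω : Fin N → ℝ) : Set ℝ :=
  {a | ∃ j, a = 1 - ω j ^ 2} ∪ {a | ∃ j k, j ≠ k ∧ a = |ω j - ω k|}

lemma finite_speedGaps (ω : Fin N → ℝ) : (speedGaps ω).Finite := by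
  refine .union ((Set.finite_range fun j => 1 - ω j ^ 2).subset ?_)
    ((Set.finite_range fun q : Fin N × Fin N => |ω q.1 - ω q.2|).subset ?_)
  · rintro _ ⟨j, rfl⟩
    exact ⟨j, rfl⟩
  · rintro _ ⟨j, k, -, rfl⟩
    exact ⟨(j, k), rfl⟩

lemma mul_omegaStar_eq_sInf (ω : Fin N → ℝ) : 256 * omegaStar ω = sInf (speedGaps ω) := by
  unfold omegaStar speedGaps
  ring

lemma mul_omegaStar_le_one_sub_sq (ω : Fin N → ℝ) (j : Fin N) :
    256 * omegaStar ω ≤ 1 - ω j ^ 2 :=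
  (mul_omegaStar_eq_sInf ω).trans_le (csInf_le (finite_speedGaps ω).bddBelow (.inl ⟨j, rfl⟩))

lemma mul_omegaStar_le_abs_sub (ω : Fin N → ℝ) {j k : Fin N} (hjk : j ≠ k) :
    256 * omegaStar ω ≤ |ω j - ω k| :=
  (mul_omegaStar_eq_sInf ω).trans_le
    (csInf_le (finite_speedGaps ω).bddBelow (.inr ⟨j, k, hjk, rfl⟩))

lemma add_mul_omegaStar_le (hω : StrictMono ω) {j k : Fin N} (hjk : j < k) :
    ω j + 256 * omegaStar ω ≤ ω k := by
  have hgap := mul_omegaStar_le_abs_sub ω hjk.ne'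
  rw [abs_of_pos (sub_pos.2 (hω hjk))] at hgap
  linarith

lemma omegaStar_pos (hN : 0 < N) (hω : ∀ j, |ω j| < 1) (hinj : Function.Injective ω) :
    0 < omegaStar ω := by
  have hne : (speedGaps ω).Nonempty := ⟨_, .inl ⟨⟨0, hN⟩, rfl⟩⟩
  refine pos_of_mul_pos_right (b := omegaStar ω) ?_ (by norm_num : (0 : ℝ) ≤ 256)
  rw [mul_omegaStar_eq_sInf]
  rcases hne.csInf_mem (finite_speedGaps ω) with ⟨j, hj⟩ | ⟨j, k, hjk, hj⟩ <;> rw [hj]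
  · exact sub_pos.2 ((sq_lt_one_iff_abs_lt_one _).2 (hω j))
  · exact abs_pos.2 (sub_ne_zero.2 (hinj.ne hjk))

end OmegaStar

lemma four_mul_rpow_three_halves_le {w : ℝ} (hw : 0 ≤ w) :
    4 * w ^ ((3 : ℝ) / 2) ≤ √(256 * w) / 2 * (256 * w / 4) := by
  have hrpow : w ^ ((3 : ℝ) / 2) = w * √w := by
    rw [show (3 : ℝ) / 2 = 1 + 1 / 2 by norm_num, rpow_one_add' hw (by norm_num), sqrt_eq_rpow]
  have hsqrt : √(256 * w) = 16 * √w := by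
    rw [sqrt_mul (by norm_num), show (256 : ℝ) = 16 ^ 2 by norm_num, sqrt_sq (by norm_num)]
  rw [hrpow, hsqrt]
  nlinarith [mul_nonneg hw (sqrt_nonneg w)]

lemma exists_forall_ge_sqrt_lt_mul {a : ℝ} (ha : 0 < a) :
    ∃ T : ℝ, ∀ t ≥ T, 0 < t ∧ √t < a * t := by
  refine ⟨2 / a ^ 2, fun t ht => ?_⟩
  have ht0 : 0 < t := (by positivity : 0 < 2 / a ^ 2).trans_le ht
  rw [ge_iff_le, div_le_iff₀ (by positivity)] at ht
  exact ⟨ht0, (sqrt_lt' (by positivity)).2 (by nlinarith)⟩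

lemma abs_le_one_of_cutoff {ψ : ℝ → ℝ} (hψ0 : ∀ s < -1, ψ s = 0)
    (hψmid : ∀ s ∈ Set.Icc (-1 : ℝ) 1, ψ s ∈ Set.Icc (0 : ℝ) 1) (hψ1 : ∀ s, 1 < s → ψ s = 1)
    (s : ℝ) : |ψ s| ≤ 1 := by
  rcases lt_or_ge s (-1) with hneg | hneg
  · simp [hψ0 s hneg]
  rcases lt_or_ge 1 s with hone | hone
  · simp [hψ1 s hone]
  obtain ⟨hlower, hupper⟩ := hψmid s ⟨hneg, hone⟩
  exact abs_le.2 ⟨by linarith, hupper⟩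

theorem soliton_interaction_estimates_general {p : ℝ} (hp : 0 < p) {N : ℕ} (hN : 0 < N)
    {ω : Fin N → ℝ} (hω : ∀ j, |ω j| < 1) (hmono : StrictMono ω) (c : Fin N → ℝ)
    {ψ : ℝ → ℝ} (hψ : Measurable ψ) {M : ℝ} (hψM : ∀ s, |ψ s| ≤ M)
    (hψ0 : ∀ s < -1, ψ s = 0) (hψ1 : ∀ s, 1 < s → ψ s = 1) :
    ∃ C : ℝ, 0 < C ∧ ∃ T : ℝ, ∀ t ≥ T, ∀ m n : Fin 2, ∀ j k : Fin N, j ≠ k →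
      (Integrable (fun x => solitonSize p (ω k) (c k) m t x * phiCut ψ ω j t x) ∧
        |∫ x, solitonSize p (ω k) (c k) m t x * phiCut ψ ω j t x|
          ≤ C * exp (-4 * omegaStar ω ^ ((3 : ℝ) / 2) * t)) ∧
      (Integrable (fun x => solitonSize p (ω k) (c k) m t x * (1 - phiCut ψ ω k t x)) ∧
        |∫ x, solitonSize p (ω k) (c k) m t x * (1 - phiCut ψ ω k t x)|
          ≤ C * exp (-4 * omegaStar ω ^ ((3 : ℝ) / 2) * t)) ∧
      (Integrable
          (fun x => solitonSize p (ω k) (c k) m t x * solitonSize p (ω j) (c j) n t x) ∧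
        |∫ x, solitonSize p (ω k) (c k) m t x * solitonSize p (ω j) (c j) n t x|
          ≤ C * exp (-4 * omegaStar ω ^ ((3 : ℝ) / 2) * t)) := by
  set δ := 256 * omegaStar ω
  have hstar : 0 < omegaStar ω := omegaStar_pos hN hω hmono.injective
  have hδ : 0 < δ := by positivity
  have hs : 0 < √δ := sqrt_pos.2 hδ
  have hgap : ∀ j k, j < k → ω j + δ ≤ ω k := fun _ _ => add_mul_omegaStar_le hmono
  have hM : 1 ≤ M := by simpa [hψ1 2 (by norm_num)] using hψM 2
  obtain ⟨A, hA, hsize⟩ := exists_forall_abs_solitonSize_le_mul_exp hp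
    (fun j => ((sq_lt_one_iff_abs_lt_one _).2 (hω j)).le) c hs.le
    (fun j => sqrt_le_sqrt (mul_omegaStar_le_one_sub_sq ω j))
  obtain ⟨T, hT⟩ := exists_forall_ge_sqrt_lt_mul (by positivity : 0 < δ / 4)
  set C := 4 * A * (3 * M) / √δ + 4 * A * A / √δ
  have hcutoff : 4 * A * (2 * M) / √δ ≤ 4 * A * (3 * M) / √δ := by gcongr; norm_num
  have hcutoff_pos : 0 < 4 * A * (3 * M) / √δ := by positivity
  have hpair_pos : 0 < 4 * A * A / √δ := by positivity
  refine ⟨C, by positivity, T, fun t ht m n j k hjk => ?_⟩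
  obtain ⟨ht0, hsqrt⟩ := hT t ht
  have hmeas (i m) : AEStronglyMeasurable (solitonSize p (ω i) (c i) m t) :=
    (measurable_solitonSize p (ω i) (c i) m t).aestronglyMeasurable
  have hfar : δ / 4 * t ≤ |ω k * t - ω j * t| := by
    rw [← sub_mul, abs_mul, abs_of_pos ht0]
    gcongr
    linarith [mul_omegaStar_le_abs_sub ω hjk.symm]
  have hrate : exp (-(√δ / 2) * (δ / 4 * t)) ≤ exp (-4 * omegaStar ω ^ ((3 : ℝ) / 2) * t) := by
    have := mul_le_mul_of_nonneg_right (four_mul_rpow_three_halves_le hstar.le) ht0.le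
    exact exp_le_exp.2 (by linarith)
  have hweaken {K I : ℝ} (hK : K ≤ C) (hI : |I| ≤ K * exp (-(√δ / 2) * (δ / 4 * t))) :
      |I| ≤ C * exp (-4 * omegaStar ω ^ ((3 : ℝ) / 2) * t) :=
    hI.trans (mul_le_mul hK hrate (exp_pos _).le (by positivity))
  exact ⟨(integrable_mul_phiCut_and_abs_integral_le hs (hmeas k m) (hsize k m t) hψ hM hψM hψ0
      hψ1 hmono.monotone hgap ht0 hsqrt hjk).imp_right (hweaken (by linarith)),
    (integrable_mul_one_sub_phiCut_and_abs_integral_le hs (hmeas k m) (hsize k m t) hψ hM hψM hψ0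
      hψ1 hmono.monotone hgap ht0 hsqrt).imp_right (hweaken (by linarith)),
    (integrable_mul_and_abs_integral_le_of_le_abs_sub hs (hmeas k m) (hmeas j n) (hsize k m t)
      (hsize j n t) hfar).imp_right (hweaken (by linarith))⟩

/-- interaction/localization estimates for the solitons. -/
theorem soliton_interaction_estimates
    (p : ℝ) (hp0 : 0 < p)
    (N : ℕ) (hN : 2 ≤ N)
    (ω : Fin N → ℝ) (hω : ∀ j, |ω j| < 1)
    (hord : ∀ j k : Fin N, j < k → ω j < ω k)
    (c : Fin N → ℝ)
    (ψ : ℝ → ℝ) (hψsmooth : ContDiff ℝ (⊤ : ℕ∞) ψ)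
    (hψ0 : ∀ s : ℝ, s < -1 → ψ s = 0)
    (hψmid : ∀ s ∈ Set.Icc (-1 : ℝ) 1, ψ s ∈ Set.Icc (0 : ℝ) 1)
    (hψ1 : ∀ s : ℝ, 1 < s → ψ s = 1) :
    ∃ C : ℝ, 0 < C ∧ ∃ T₁ : ℝ, ∀ t ≥ T₁, ∀ m n : Fin 2, ∀ j k : Fin N, j ≠ k →
      -- (i)
      ((∫ x : ℝ, (|soliton p (ω k) (c k) m t x| +
          |deriv (soliton p (ω k) (c k) m t) x|) * phiCut ψ ω j t x)
        ≤ C * Real.exp (-4 * omegaStar ω ^ ((3 : ℝ) / 2) * t)) ∧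
      -- (ii)
      ((∫ x : ℝ, (|soliton p (ω k) (c k) m t x| +
          |deriv (soliton p (ω k) (c k) m t) x|) * (1 - phiCut ψ ω k t x))
        ≤ C * Real.exp (-4 * omegaStar ω ^ ((3 : ℝ) / 2) * t)) ∧
      -- (iii)
      ((∫ x : ℝ, (|soliton p (ω k) (c k) m t x| +
          |deriv (soliton p (ω k) (c k) m t) x|) *
          (|soliton p (ω j) (c j) n t x| + |deriv (soliton p (ω j) (c j) n t) x|))
        ≤ C * Real.exp (-4 * omegaStar ω ^ ((3 : ℝ) / 2) * t)) := by
  have hψM : ∀ s, |ψ s| ≤ 1 := abs_le_one_of_cutoff hψ0 hψmid hψ1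
  obtain ⟨C, hC, T, h⟩ := soliton_interaction_estimates_general hp0 (by omega) hω hord c
    hψsmooth.continuous.measurable hψM hψ0 hψ1
  exact ⟨C, hC, T, fun t ht m n j k hjk => (h t ht m n j k hjk).imp (le_of_abs_le ·.2)
    (.imp (le_of_abs_le ·.2) (le_of_abs_le ·.2))⟩
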